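/- Non-degenerate p-growth of the homogenized energy density (Lemma 3.8 of the paper): assume Assumption H. Then there exists a constant c₁' > 0 such that for all F ∈ ℝ^{n×d}: (1/c₁')|F|^p − c₁' ≤ W₀(F) ≤ c₁'(1 + |F|^p). -/

import Mathlib

open MeasureTheory Filter Metric Set
open scoped Classical
open scoped ENNReal Topology Pointwise

noncomputable section

namespace StochHom

/-- `ℝ^d` with the Euclidean norm. -/
abbrev Rd (d : ℕ) : Type := EuclideanSpace ℝ (Fin d)

/-- `ℝ^n` with the Euclidean norm. -/
abbrev Rn (n : ℕ) : Type := EuclideanSpace ℝ (Fin n)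

/-- The lattice `ℤ^d`. -/
abbrev Zd (d : ℕ) : Type := Fin d → ℤ

variable {d n : ℕ}

/-- The embedding of the lattice `ℤ^d` into `ℝ^d`. -/
def toRd (z : Zd d) : Rd d := (EuclideanSpace.equiv (Fin d) ℝ).symm fun i => (z i : ℝ)

/-- The standard basis vectors `eᵢ` of `ℤ^d`. -/
def stdb (i : Fin d) : Zd d := fun j => if j = i then 1 else 0

/-- The interaction range `R = max {4√d, max_{b ∈ ℰ₀} |b|}`. -/
def irange (d : ℕ) (E0 : Finset (Zd d)) : ℝ :=
  max (4 * Real.sqrt d) (sSup ((fun b : Zd d => ‖toRd b‖) '' (E0 : Set (Zd d))))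

variable {Ω : Type*} [MeasurableSpace Ω]

/-- The energy `E₁(ω; u, ℤ^d ∩ A)`. -/
def energy1 (τ : Zd d → Ω → Ω) (E0 : Finset (Zd d)) (V : Zd d → Ω → Rn n → ℝ)
    (ω : Ω) (u : Zd d → Rn n) (A : Set (Rd d)) : ℝ :=
  ∑' z : Zd d, if toRd z ∈ A then
      ∑ b ∈ E0, V b (τ z ω) ((‖toRd b‖)⁻¹ • (u (z + b) - u z)) else 0

/-- The scaled energy `E_ε(ω; u, A)`, where a function `u : εℤ^d → ℝ^n` is identified with a
function on `ℤ^d` via `z ↦ u(εz)`, so that `∂_b^ε u (z) = (u (z+b) - u z)/(ε |b|)`. -/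
def energyE (τ : Zd d → Ω → Ω) (E0 : Finset (Zd d)) (V : Zd d → Ω → Rn n → ℝ)
    (ε : ℝ) (ω : Ω) (u : Zd d → Rn n) (A : Set (Rd d)) : ℝ :=
  ε ^ d * ∑' z : Zd d, if ε • toRd z ∈ A then
      ∑ b ∈ E0, V b (τ z ω) ((ε * ‖toRd b‖)⁻¹ • (u (z + b) - u z)) else 0

/-- The localized minimal energy `m_F(ω; A)`. -/
def mF (τ : Zd d → Ω → Ω) (E0 : Finset (Zd d)) (V : Zd d → Ω → Rn n → ℝ)
    (ω : Ω) (F : Rd d →L[ℝ] Rn n) (A : Set (Rd d)) : ℝ :=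
  ⨅ φ : {φ : Zd d → Rn n // ∀ z : Zd d, infDist (toRd z) Aᶜ ≤ irange d E0 → φ z = 0},
    energy1 τ E0 V ω (fun z => F (toRd z) + φ.1 z) A

/-- The half-open cube `[0,k)^d ⊂ ℝ^d`. -/
def cube (d k : ℕ) : Set (Rd d) := {x | ∀ i, 0 ≤ x i ∧ x i < (k : ℝ)}

/-- The homogenized energy density `W₀(F) = inf_{k ≥ 1} k⁻ᵈ E[m_F(·, [0,k)^d)]`. -/
def W0 (P : Measure Ω) (τ : Zd d → Ω → Ω) (E0 : Finset (Zd d))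
    (V : Zd d → Ω → Rn n → ℝ) (F : Rd d →L[ℝ] Rn n) : ℝ :=
  ⨅ k : {k : ℕ // 0 < k}, (((k : ℕ) : ℝ) ^ d)⁻¹ * ∫ ω, mF τ E0 V ω F (cube d k) ∂P

/-- Half-open axis-parallel box `Π_i [aᵢ, bᵢ)`. -/
def halfBox (a b : Fin d → ℝ) : Set (Rd d) := {x | ∀ i, a i ≤ x i ∧ x i < b i}

/-- Open axis-parallel box `Π_i (aᵢ, bᵢ)`. -/
def openBox (a b : Fin d → ℝ) : Set (Rd d) := {x | ∀ i, a i < x i ∧ x i < b i}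

/-- Closed axis-parallel box `Π_i [aᵢ, bᵢ]`. -/
def closedBox (a b : Fin d → ℝ) : Set (Rd d) := {x | ∀ i, a i ≤ x i ∧ x i ≤ b i}

/-- Half-open axis-parallel box with integer corners. -/
def intBox (a b : Zd d) : Set (Rd d) := {x | ∀ i, (a i : ℝ) ≤ x i ∧ x i < (b i : ℝ)}

/-- The periodic cell minimization `W^{(k)}(ω; F)`. -/
def Wper (τ : Zd d → Ω → Ω) (E0 : Finset (Zd d)) (V : Zd d → Ω → Rn n → ℝ)
    (k : ℕ) (ω : Ω) (F : Rd d →L[ℝ] Rn n) : ℝ :=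
  ⨅ φ : {φ : Zd d → Rn n // ∀ z z' : Zd d, φ (z + k • z') = φ z},
    ((k : ℝ) ^ d)⁻¹ * energy1 τ E0 V ω (fun z => F (toRd z) + φ.1 z) (cube d k)

/-- lattice points of the cube -/
def latt (d k : ℕ) : Finset (Zd d) := Fintype.piFinset fun _ => Finset.Ico (0 : ℤ) k

lemma toRd_apply (z : Zd d) (i : Fin d) : toRd z i = (z i : ℝ) := rfl

lemma mem_latt (k : ℕ) (z : Zd d) : z ∈ latt d k ↔ ∀ i, 0 ≤ z i ∧ z i < k := by
  simp [latt, Fintype.mem_piFinset]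

lemma toRd_mem_cube (k : ℕ) (z : Zd d) : toRd z ∈ cube d k ↔ z ∈ latt d k := by
  rw [mem_latt]
  simp only [cube, mem_setOf_eq, toRd_apply]
  refine forall_congr' fun i => ?_
  constructor
  · rintro ⟨h1, h2⟩; exact ⟨by exact_mod_cast h1, by exact_mod_cast h2⟩
  · rintro ⟨h1, h2⟩; exact ⟨by exact_mod_cast h1, by exact_mod_cast h2⟩

lemma card_latt (k : ℕ) : (latt d k).card = k ^ d := by
  simp [latt, Fintype.card_piFinset]

lemma energy1_cube (τ : Zd d → Ω → Ω) (E0 : Finset (Zd d)) (V : Zd d → Ω → Rn n → ℝ)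
    (ω : Ω) (u : Zd d → Rn n) (k : ℕ) :
    energy1 τ E0 V ω u (cube d k) = ∑ z ∈ latt d k,
      ∑ b ∈ E0, V b (τ z ω) ((‖toRd b‖)⁻¹ • (u (z + b) - u z)) := by
  unfold energy1
  rw [tsum_eq_sum (s := latt d k)]
  · refine Finset.sum_congr rfl fun z hz => ?_
    rw [if_pos ((toRd_mem_cube k z).2 hz)]
  · intro z hz
    rw [if_neg fun h => hz ((toRd_mem_cube k z).1 h)]

lemma toRd_stdb (i : Fin d) : toRd (stdb i) = EuclideanSpace.single i (1 : ℝ) := by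
  ext j
  rw [toRd_apply]
  by_cases h : j = i <;> simp [stdb, h]

lemma norm_toRd_stdb (i : Fin d) : ‖toRd (stdb i)‖ = 1 := by
  rw [toRd_stdb]; simp

lemma toRd_add (z w : Zd d) : toRd (z + w) = toRd z + toRd w := by
  ext j
  simp [toRd_apply]

lemma toRd_sub (z w : Zd d) : toRd (z - w) = toRd z - toRd w := by
  ext j
  simp [toRd_apply]

lemma one_le_irange (hd : 2 ≤ d) (E0 : Finset (Zd d)) : 1 ≤ irange d E0 := by
  refine le_trans ?_ (le_max_left _ _)
  have : 1 ≤ Real.sqrt d := by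
    rw [Real.one_le_sqrt]; exact_mod_cast (by omega : 1 ≤ d)
  linarith

/-- telescoping -/
lemma sum_diff_zero (hd : 2 ≤ d) (E0 : Finset (Zd d)) (k : ℕ) (i : Fin d) (φ : Zd d → Rn n)
    (hφ : ∀ z : Zd d, infDist (toRd z) (cube d k)ᶜ ≤ irange d E0 → φ z = 0) :
    ∑ z ∈ latt d k, (φ (z + stdb i) - φ z) = 0 := by
  have hR := one_le_irange hd E0
  have h1 : ∀ z, z ∉ latt d k → φ z = 0 := by
    intro z hz
    apply hφ
    rw [infDist_zero_of_mem]
    · linarith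
    · exact fun h => hz ((toRd_mem_cube k z).1 h)
  have h2 : ∀ z, z ∉ latt d k → φ (z + stdb i) = 0 := by
    intro z hz
    apply hφ
    refine le_trans (infDist_le_dist_of_mem (y := toRd z)
      (fun h => hz ((toRd_mem_cube k z).1 h))) ?_
    rw [toRd_add, dist_eq_norm, add_sub_cancel_left, norm_toRd_stdb]
    exact hR
  have t1 : ∑' z, φ z = ∑ z ∈ latt d k, φ z := tsum_eq_sum fun z hz => h1 z hz
  have t2 : ∑' z, φ (z + stdb i) = ∑ z ∈ latt d k, φ (z + stdb i) :=
    tsum_eq_sum fun z hz => h2 z hz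
  rw [Finset.sum_sub_distrib, ← t1, ← t2, sub_eq_zero]
  exact (Equiv.addRight (stdb i)).tsum_eq φ

lemma young_aux (p : ℝ) (hp : 1 < p) (l s μ : ℝ) (hl : 0 < l) (hs : 0 ≤ s) (hμ : 0 ≤ μ) :
    p * μ * s - (p - 1) * μ ^ (p / (p - 1)) * l ^ (-(1 / (p - 1))) ≤ l * s ^ p := by
  have hp0 : 0 < p := by linarith
  have hp1 : 0 < p - 1 := by linarith
  have hc : p.HolderConjugate (p / (p - 1)) := Real.HolderConjugate.conjExponent hp
  have h := Real.young_inequality_of_nonneg (a := l ^ (1 / p) * s) (b := μ * l ^ (-(1 / p)))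
    (by positivity) (by positivity) hc
  rw [Real.mul_rpow (by positivity) hs, Real.mul_rpow hμ (by positivity),
    ← Real.rpow_mul hl.le, ← Real.rpow_mul hl.le] at h
  have e1 : 1 / p * p = 1 := by field_simp
  have e2 : -(1 / p) * (p / (p - 1)) = -(1 / (p - 1)) := by field_simp
  rw [e1, e2, Real.rpow_one] at h
  have e3 : l ^ (1 / p) * s * (μ * l ^ (-(1 / p))) = μ * s := by
    have : l ^ (1 / p) * l ^ (-(1 / p)) = 1 := by
      rw [← Real.rpow_add hl]; simp
    linear_combination (s * μ) * this
  rw [e3] at h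
  have h' := mul_le_mul_of_nonneg_left h hp0.le
  have e4 : p * (l * s ^ p / p + μ ^ (p / (p - 1)) * l ^ (-(1 / (p - 1))) / (p / (p - 1)))
      = l * s ^ p + (p - 1) * μ ^ (p / (p - 1)) * l ^ (-(1 / (p - 1))) := by
    field_simp
  rw [e4] at h'
  linarith

lemma norm_F_le (F : Rd d →L[ℝ] Rn n) : ‖F‖ ≤ ∑ i : Fin d, ‖F (toRd (stdb i))‖ := by
  refine F.opNorm_le_bound (Finset.sum_nonneg fun _ _ => norm_nonneg _) fun x => ?_
  have hx : x = ∑ i, x i • toRd (stdb i) := by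
    ext j
    simp [toRd_stdb, Pi.single_apply]
  conv_lhs => rw [hx]
  rw [map_sum, Finset.sum_mul]
  refine (norm_sum_le _ _).trans (Finset.sum_le_sum fun i _ => ?_)
  rw [map_smul, norm_smul, mul_comm]
  exact mul_le_mul_of_nonneg_left (PiLp.norm_apply_le x i) (norm_nonneg _)

lemma exists_dir (hd : 2 ≤ d) (F : Rd d →L[ℝ] Rn n) :
    ∃ i : Fin d, ‖F‖ / d ≤ ‖F (toRd (stdb i))‖ := by
  by_contra! h
  have hne : (Finset.univ : Finset (Fin d)).Nonempty := ⟨⟨0, by omega⟩, Finset.mem_univ _⟩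
  have h1 := Finset.sum_lt_sum_of_nonempty hne fun i _ => h i
  have h2 := norm_F_le F
  have hd0 : (d : ℝ) ≠ 0 := by exact_mod_cast (by omega : d ≠ 0)
  simp only [Finset.sum_const, Finset.card_univ, Fintype.card_fin, nsmul_eq_mul] at h1
  rw [mul_div_cancel₀ _ hd0] at h1
  linarith

lemma measurable_iInf_cont {X : Type*} [TopologicalSpace X] [TopologicalSpace.SeparableSpace X]
    [Nonempty X] (f : Ω → X → ℝ) (hf : ∀ ω, Continuous (f ω)) (hm : ∀ x, Measurable fun ω => f ω x)
    (h0 : ∀ ω x, 0 ≤ f ω x) : Measurable fun ω => ⨅ x, f ω x := by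
  have hb : ∀ ω, BddBelow (range (f ω)) := fun ω => ⟨0, by rintro _ ⟨x, rfl⟩; exact h0 ω x⟩
  have hb' : ∀ ω, BddBelow (range fun m : ℕ => f ω (TopologicalSpace.denseSeq X m)) :=
    fun ω => ⟨0, by rintro _ ⟨x, rfl⟩; exact h0 ω _⟩
  have key : (fun ω => ⨅ x, f ω x) = fun ω => ⨅ m : ℕ, f ω (TopologicalSpace.denseSeq X m) := by
    funext ω
    apply le_antisymm
    · exact le_ciInf fun m => ciInf_le (hb ω) _
    · refine le_ciInf fun x => ?_
      refine (TopologicalSpace.denseRange_denseSeq X).induction_on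
        (p := fun x => (⨅ m : ℕ, f ω (TopologicalSpace.denseSeq X m)) ≤ f ω x) x
        (isClosed_le continuous_const (hf ω)) fun m => ciInf_le (hb' ω) m
  rw [key]
  exact Measurable.iInf fun m => hm _

lemma mF_measurable (τ : Zd d → Ω → Ω) (hτ : ∀ z, Measurable (τ z)) (E0 : Finset (Zd d))
    (V : Zd d → Ω → Rn n → ℝ)
    (hVmeas : ∀ b ∈ E0, Measurable fun q : Ω × Rn n => V b q.1 q.2)
    (hVcont : ∀ b ∈ E0, ∀ ω : Ω, Continuous (V b ω))
    (hVnn : ∀ b ∈ E0, ∀ (ω : Ω) (r : Rn n), 0 ≤ V b ω r)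
    (F : Rd d →L[ℝ] Rn n) (k : ℕ) : Measurable fun ω => mF τ E0 V ω F (cube d k) := by
  unfold mF
  haveI : Nonempty {φ : Zd d → Rn n //
    ∀ z : Zd d, infDist (toRd z) (cube d k)ᶜ ≤ irange d E0 → φ z = 0} := ⟨⟨0, fun _ _ => rfl⟩⟩
  have : SecondCountableTopology {φ : Zd d → Rn n //
      ∀ z : Zd d, infDist (toRd z) (cube d k)ᶜ ≤ irange d E0 → φ z = 0} :=
    TopologicalSpace.Subtype.secondCountableTopology _
  simp only [energy1_cube]
  apply measurable_iInf_cont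
  · intro ω
    refine continuous_finset_sum _ fun z _ => continuous_finset_sum _ fun b hb => ?_
    refine (hVcont b hb _).comp ?_
    have h : ∀ w : Zd d, Continuous fun φ : {φ : Zd d → Rn n //
        ∀ z : Zd d, infDist (toRd z) (cube d k)ᶜ ≤ irange d E0 → φ z = 0} => φ.1 w :=
      fun w => (continuous_apply w).comp continuous_subtype_val
    exact (((continuous_const.add (h _)).sub (continuous_const.add (h _))).const_smul
      ((‖toRd b‖)⁻¹ : ℝ))
  · intro φ
    refine Finset.measurable_sum _ fun z _ => Finset.measurable_sum _ fun b hb => ?_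
    exact (hVmeas b hb).comp ((hτ z).prodMk measurable_const)
  · intro ω φ
    exact Finset.sum_nonneg fun z _ => Finset.sum_nonneg fun b hb => hVnn b hb _ _

lemma energy1_cube_nonneg (τ : Zd d → Ω → Ω) (E0 : Finset (Zd d)) (V : Zd d → Ω → Rn n → ℝ)
    (hVnn : ∀ b ∈ E0, ∀ (ω : Ω) (r : Rn n), 0 ≤ V b ω r)
    (ω : Ω) (u : Zd d → Rn n) (k : ℕ) : 0 ≤ energy1 τ E0 V ω u (cube d k) := by
  rw [energy1_cube]
  exact Finset.sum_nonneg fun z _ => Finset.sum_nonneg fun b hb => hVnn b hb _ _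

lemma mF_nonneg (τ : Zd d → Ω → Ω) (E0 : Finset (Zd d)) (V : Zd d → Ω → Rn n → ℝ)
    (hVnn : ∀ b ∈ E0, ∀ (ω : Ω) (r : Rn n), 0 ≤ V b ω r)
    (ω : Ω) (F : Rd d →L[ℝ] Rn n) (k : ℕ) : 0 ≤ mF τ E0 V ω F (cube d k) :=
  Real.iInf_nonneg fun _ => energy1_cube_nonneg τ E0 V hVnn ω _ k

lemma mF_le (τ : Zd d → Ω → Ω) (E0 : Finset (Zd d)) (hE00 : (0 : Zd d) ∉ E0)
    (V : Zd d → Ω → Rn n → ℝ)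
    (hVnn : ∀ b ∈ E0, ∀ (ω : Ω) (r : Rn n), 0 ≤ V b ω r)
    (p c₁ : ℝ) (hp : 1 < p) (hc₁ : 0 < c₁) (lam : Zd d → Ω → ℝ)
    (hlamnn : ∀ b ∈ E0, ∀ ω : Ω, 0 ≤ lam b ω)
    (hgrowth : ∀ b ∈ E0, ∀ (ω : Ω) (r : Rn n),
      lam b ω * (‖r‖ ^ p / c₁ - c₁) ≤ V b ω r ∧ V b ω r ≤ c₁ * (1 + lam b ω * (‖r‖ ^ p + 1)))
    (ω : Ω) (F : Rd d →L[ℝ] Rn n) (k : ℕ) :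
    mF τ E0 V ω F (cube d k) ≤
      ∑ z ∈ latt d k, ∑ b ∈ E0, c₁ * (1 + lam b (τ z ω) * (‖F‖ ^ p + 1)) := by
  refine (ciInf_le ⟨0, ?_⟩ ⟨0, fun _ _ => rfl⟩).trans ?_
  · rintro _ ⟨φ, rfl⟩
    exact energy1_cube_nonneg τ E0 V hVnn ω _ k
  · rw [energy1_cube]
    refine Finset.sum_le_sum fun z _ => Finset.sum_le_sum fun b hb => ?_
    refine (hgrowth b hb _ _).2.trans ?_
    have hb0 : 0 ≤ lam b (τ z ω) := hlamnn b hb _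
    have hn : ‖(‖toRd b‖)⁻¹ • (F (toRd (z + b)) + (0 : Zd d → Rn n) (z + b) -
        (F (toRd z) + (0 : Zd d → Rn n) z))‖ ≤ ‖F‖ := by
      simp only [Pi.zero_apply, add_zero, ← map_sub, toRd_add, add_sub_cancel_left]
      rw [norm_smul, norm_inv, norm_norm, inv_mul_eq_div]
      exact F.ratio_le_opNorm _
    gcongr

/-- deterministic lower bound -/
lemma le_mF (hd : 2 ≤ d) (τ : Zd d → Ω → Ω) (E0 : Finset (Zd d)) (V : Zd d → Ω → Rn n → ℝ)
    (hVnn : ∀ b ∈ E0, ∀ (ω : Ω) (r : Rn n), 0 ≤ V b ω r)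
    (p c₁ : ℝ) (hp : 1 < p) (hc₁ : 0 < c₁) (lam : Zd d → Ω → ℝ)
    (hgrowth : ∀ b ∈ E0, ∀ (ω : Ω) (r : Rn n),
      lam b ω * (‖r‖ ^ p / c₁ - c₁) ≤ V b ω r ∧ V b ω r ≤ c₁ * (1 + lam b ω * (‖r‖ ^ p + 1)))
    (i : Fin d) (hi : stdb i ∈ E0)
    (ω : Ω) (hω : ∀ z, 0 < lam (stdb i) (τ z ω)) (μ : ℝ) (hμ : 0 ≤ μ)
    (F : Rd d →L[ℝ] Rn n) (k : ℕ) :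
    (k : ℝ) ^ d * (p * μ * ‖F (toRd (stdb i))‖ / c₁) -
      ∑ z ∈ latt d k, ((p - 1) * μ ^ (p / (p - 1)) / c₁ *
        (lam (stdb i) (τ z ω)) ^ (-(1 / (p - 1))) + c₁ * lam (stdb i) (τ z ω))
      ≤ mF τ E0 V ω F (cube d k) := by
  haveI : Nonempty {φ : Zd d → Rn n //
    ∀ z : Zd d, infDist (toRd z) (cube d k)ᶜ ≤ irange d E0 → φ z = 0} := ⟨⟨0, fun _ _ => rfl⟩⟩
  refine le_ciInf fun φ => ?_
  rw [energy1_cube]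
  set D : Zd d → Rn n := fun z =>
    F (toRd (z + stdb i)) + φ.1 (z + stdb i) - (F (toRd z) + φ.1 z) with hD
  have hsum : ∑ z ∈ latt d k, D z = ((k : ℝ) ^ d) • F (toRd (stdb i)) := by
    have h0 := sum_diff_zero hd E0 k i φ.1 φ.2
    have : ∀ z, D z = F (toRd (stdb i)) + (φ.1 (z + stdb i) - φ.1 z) := by
      intro z
      simp only [hD, toRd_add, map_add]
      abel
    simp only [this]
    rw [Finset.sum_add_distrib, h0, add_zero, Finset.sum_const, card_latt,
      ← Nat.cast_smul_eq_nsmul ℝ]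
    push_cast
    rfl
  have hnorm : (k : ℝ) ^ d * ‖F (toRd (stdb i))‖ ≤ ∑ z ∈ latt d k, ‖D z‖ := by
    have := norm_sum_le (latt d k) D
    rw [hsum, norm_smul] at this
    simpa using this
  have hp0 : 0 < p := by linarith
  have step : ∀ z ∈ latt d k, p * μ / c₁ * ‖D z‖ - ((p - 1) * μ ^ (p / (p - 1)) / c₁ *
        (lam (stdb i) (τ z ω)) ^ (-(1 / (p - 1))) + c₁ * lam (stdb i) (τ z ω)) ≤
      ∑ b ∈ E0, V b (τ z ω) ((‖toRd b‖)⁻¹ • (F (toRd (z + b)) + φ.1 (z + b) -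
        (F (toRd z) + φ.1 z))) := by
    intro z _
    refine le_trans ?_ (Finset.single_le_sum (fun b hb => hVnn b hb _ _) hi)
    refine le_trans ?_ (hgrowth _ hi _ _).1
    rw [norm_toRd_stdb, inv_one, one_smul]
    have hy := young_aux p hp (lam (stdb i) (τ z ω)) ‖D z‖ μ (hω z) (norm_nonneg _) hμ
    have hy' := div_le_div_of_nonneg_right hy hc₁.le
    change _ ≤ lam (stdb i) (τ z ω) * (‖D z‖ ^ p / c₁ - c₁)
    have e1 : lam (stdb i) (τ z ω) * (‖D z‖ ^ p / c₁ - c₁) =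
      lam (stdb i) (τ z ω) * ‖D z‖ ^ p / c₁ - c₁ * lam (stdb i) (τ z ω) := by ring
    rw [e1]
    refine le_trans (le_of_eq ?_) (sub_le_sub_right hy' _)
    ring
  refine le_trans ?_ (Finset.sum_le_sum step)
  rw [Finset.sum_sub_distrib, ← Finset.mul_sum]
  refine sub_le_sub_right ?_ _
  have : 0 ≤ p * μ / c₁ := by positivity
  calc _ = p * μ / c₁ * ((k : ℝ) ^ d * ‖F (toRd (stdb i))‖) := by ring
    _ ≤ _ := mul_le_mul_of_nonneg_left hnorm this

lemma integrable_lam (P : Measure Ω) [IsProbabilityMeasure P] (f : Ω → ℝ) (hf : Measurable f)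
    (h0 : ∀ ω, 0 ≤ f ω) (α : ℝ) (hα : 1 ≤ α)
    (hm : ∫⁻ ω, ENNReal.ofReal (f ω ^ α) ∂P < ⊤) : Integrable f P := by
  have h1 : Integrable (fun ω => f ω ^ α) P := by
    refine ⟨(hf.pow_const α).aestronglyMeasurable, ?_⟩
    rw [hasFiniteIntegral_iff_ofReal (Eventually.of_forall fun ω => Real.rpow_nonneg (h0 ω) _)]
    exact hm
  refine ((integrable_const (1 : ℝ)).add h1).mono' hf.aestronglyMeasurable
    (Eventually.of_forall fun ω => ?_)
  rw [Real.norm_of_nonneg (h0 ω)]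
  change f ω ≤ 1 + f ω ^ α
  rcases le_total (f ω) 1 with h | h
  · have := Real.rpow_nonneg (h0 ω) α
    linarith
  · have := Real.rpow_le_rpow_of_exponent_le h hα
    rw [Real.rpow_one] at this
    linarith

lemma pos_ae (P : Measure Ω) [IsProbabilityMeasure P] (f : Ω → ℝ) (hf : Measurable f)
    (β : ℝ) (hβ : 0 < β)
    (hm : ∫⁻ ω, ENNReal.ofReal (f ω) ^ (-β) ∂P < ⊤) : ∀ᵐ ω ∂P, 0 < f ω := by
  have := ae_lt_top (hf.ennreal_ofReal.pow_const (-β)) hm.ne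
  filter_upwards [this] with ω hω
  by_contra! h
  rw [ENNReal.ofReal_of_nonpos h, ENNReal.zero_rpow_of_neg (by linarith)] at hω
  exact lt_irrefl _ hω

lemma integrable_inv (P : Measure Ω) [IsProbabilityMeasure P] (f : Ω → ℝ) (hf : Measurable f)
    (γ β : ℝ) (hγ : 0 < γ) (hβ : γ ≤ β)
    (hm : ∫⁻ ω, ENNReal.ofReal (f ω) ^ (-β) ∂P < ⊤) : Integrable (fun ω => f ω ^ (-γ)) P := by
  have hpos := pos_ae P f hf β (by linarith) hm
  have h1 : Integrable (fun ω => f ω ^ (-β)) P := by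
    refine ⟨(hf.pow_const _).aestronglyMeasurable, ?_⟩
    rw [hasFiniteIntegral_iff_ofReal (by
      filter_upwards [hpos] with ω hω using Real.rpow_nonneg hω.le _)]
    refine lt_of_eq_of_lt (lintegral_congr_ae ?_) hm
    filter_upwards [hpos] with ω hω
    exact (ENNReal.ofReal_rpow_of_pos hω).symm
  refine ((integrable_const (1 : ℝ)).add h1).mono' (hf.pow_const _).aestronglyMeasurable ?_
  filter_upwards [hpos] with ω hω
  rw [Real.norm_of_nonneg (Real.rpow_nonneg hω.le _)]
  change f ω ^ (-γ) ≤ 1 + f ω ^ (-β)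
  rcases le_total (f ω) 1 with h | h
  · have := Real.rpow_le_rpow_of_exponent_ge hω h (neg_le_neg hβ)
    linarith
  · have := Real.rpow_le_one_of_one_le_of_nonpos h (by linarith : -γ ≤ 0)
    have := Real.rpow_nonneg hω.le (-β)
    linarith

/-- choice of the slope in the Young inequality -/
lemma slope_aux (p M K a : ℝ) (hp : 1 < p) (hK : 1 ≤ K) (hMK : M ≤ K) (ha : 0 ≤ a) :
    K ^ (-(p - 1)) * a ^ p ≤ p * (K ^ (-(p - 1)) * a ^ (p - 1)) * a -
      (p - 1) * (K ^ (-(p - 1)) * a ^ (p - 1)) ^ (p / (p - 1)) * M := by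
  have hp1 : 0 < p - 1 := by linarith
  have hK0 : 0 < K := by linarith
  have e1 : a ^ (p - 1) * a = a ^ p := by
    conv_lhs => rw [← Real.rpow_one a, ← Real.rpow_mul ha, one_mul]
    rw [← Real.rpow_add_of_nonneg ha hp1.le zero_le_one]
    congr 1; ring
  have e2 : (K ^ (-(p - 1)) * a ^ (p - 1)) ^ (p / (p - 1)) = K ^ (-p) * a ^ p := by
    rw [Real.mul_rpow (by positivity) (by positivity), ← Real.rpow_mul hK0.le, ← Real.rpow_mul ha]
    congr 2 <;> field_simp
  have e3 : K ^ (-p) * K = K ^ (-(p - 1)) := by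
    conv_lhs => rw [← Real.rpow_one K, ← Real.rpow_mul hK0.le, one_mul]
    rw [← Real.rpow_add hK0]
    congr 1; ring
  rw [e2]
  have h1 : (p - 1) * (K ^ (-p) * a ^ p) * M ≤ (p - 1) * (K ^ (-p) * a ^ p) * K :=
    mul_le_mul_of_nonneg_left hMK (by positivity)
  have h2 : (p - 1) * (K ^ (-p) * a ^ p) * K = (p - 1) * (K ^ (-(p - 1)) * a ^ p) := by
    rw [← e3]; ring
  have h3 : p * (K ^ (-(p - 1)) * a ^ (p - 1)) * a = p * (K ^ (-(p - 1)) * a ^ p) := by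
    rw [← e1]; ring
  rw [h3]
  linarith

/-- non-degenerate `p`-growth of the homogenized energy density,
Lemma 3.8 of the paper. -/
theorem growth_W0
    {d n : ℕ} (hd : 2 ≤ d) (hn : 1 ≤ n)
    {Ω : Type*} [MeasurableSpace Ω] (P : Measure Ω) [IsProbabilityMeasure P]
    (τ : Zd d → Ω → Ω) (hτ0 : τ 0 = id)
    (hτadd : ∀ x y : Zd d, τ (x + y) = τ x ∘ τ y)
    (hτmp : ∀ z : Zd d, MeasurePreserving (τ z) P P)
    (hτerg : ∀ B : Set Ω, MeasurableSet B → (∀ z : Zd d, τ z ⁻¹' B = B) → P B = 0 ∨ P B = 1)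
    (E0 : Finset (Zd d)) (hE00 : (0 : Zd d) ∉ E0) (hE0b : ∀ i : Fin d, stdb i ∈ E0)
    (p c₁ : ℝ) (hp : 1 < p) (hc₁ : 0 < c₁)
    (V : Zd d → Ω → Rn n → ℝ)
    (hVmeas : ∀ b ∈ E0, Measurable fun q : Ω × Rn n => V b q.1 q.2)
    (hVcont : ∀ b ∈ E0, ∀ ω : Ω, Continuous (V b ω))
    (hVnn : ∀ b ∈ E0, ∀ (ω : Ω) (r : Rn n), 0 ≤ V b ω r)
    (lam : Zd d → Ω → ℝ)
    (hlammeas : ∀ b ∈ E0, Measurable (lam b))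
    (hlamnn : ∀ b ∈ E0, ∀ ω : Ω, 0 ≤ lam b ω)
    (hgrowth : ∀ b ∈ E0, ∀ (ω : Ω) (r : Rn n),
      lam b ω * (‖r‖ ^ p / c₁ - c₁) ≤ V b ω r ∧ V b ω r ≤ c₁ * (1 + lam b ω * (‖r‖ ^ p + 1)))
    (α β : ℝ) (hα : 1 ≤ α) (hβ : 1 / (p - 1) ≤ β)
    (hmomα : ∀ b ∈ E0, ∫⁻ ω, ENNReal.ofReal (lam b ω ^ α) ∂P < ⊤)
    (hmomβ : ∀ i : Fin d, ∫⁻ ω, ENNReal.ofReal (lam (stdb i) ω) ^ (-β) ∂P < ⊤)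
    : ∃ c₁' : ℝ, 0 < c₁' ∧ ∀ F : Rd d →L[ℝ] Rn n,
      (1 / c₁') * ‖F‖ ^ p - c₁' ≤ W0 P τ E0 V F ∧
      W0 P τ E0 V F ≤ c₁' * (1 + ‖F‖ ^ p) := by
  have hp0 : 0 < p := by linarith
  have hp1 : 0 < p - 1 := by linarith
  set γ : ℝ := 1 / (p - 1) with hγ
  have hγ0 : 0 < γ := by positivity
  have hτm : ∀ z, Measurable (τ z) := fun z => (hτmp z).measurable
  have hint : ∀ b ∈ E0, Integrable (lam b) P := fun b hb =>
    integrable_lam P _ (hlammeas b hb) (hlamnn b hb) α hα (hmomα b hb)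
  have hinv : ∀ i, Integrable (fun ω => lam (stdb i) ω ^ (-γ)) P := fun i =>
    integrable_inv P _ (hlammeas _ (hE0b i)) γ β hγ0 hβ (hmomβ i)
  have hpos : ∀ i, ∀ᵐ ω ∂P, ∀ z, 0 < lam (stdb i) (τ z ω) := fun i => by
    rw [ae_all_iff]
    intro z
    exact (hτmp z).quasiMeasurePreserving.ae
      (pos_ae P _ (hlammeas _ (hE0b i)) β (by linarith) (hmomβ i))
  -- shifted integrals
  have hshI : ∀ (f : Ω → ℝ), Integrable f P → ∀ z, Integrable (fun ω => f (τ z ω)) P :=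
    fun f hf z => (hτmp z).integrable_comp_of_integrable hf
  have hshE : ∀ (f : Ω → ℝ), Integrable f P → ∀ z, ∫ ω, f (τ z ω) ∂P = ∫ ω, f ω ∂P := by
    intro f hf z
    have hmap := (hτmp z).map_eq
    have h := integral_map (μ := P) (φ := τ z) (f := f) (hτm z).aemeasurable
      (by rw [hmap]; exact hf.aestronglyMeasurable)
    rw [hmap] at h
    exact h.symm
  have hLnn : ∀ b ∈ E0, 0 ≤ ∫ ω, lam b ω ∂P := fun b hb => integral_nonneg (hlamnn b hb)
  -- upper bound functions
  have hupI : ∀ (F : Rd d →L[ℝ] Rn n) (k : ℕ), Integrable (fun ω => ∑ z ∈ latt d k, ∑ b ∈ E0,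
      c₁ * (1 + lam b (τ z ω) * (‖F‖ ^ p + 1))) P := by
    intro F k
    refine integrable_finset_sum _ fun z _ => integrable_finset_sum _ fun b hb => ?_
    exact ((integrable_const 1).add ((hshI _ (hint b hb) z).mul_const _)).const_mul _
  have hmI : ∀ (F : Rd d →L[ℝ] Rn n) (k : ℕ),
      Integrable (fun ω => mF τ E0 V ω F (cube d k)) P := by
    intro F k
    refine (hupI F k).mono'
      (mF_measurable τ hτm E0 V hVmeas hVcont hVnn F k).aestronglyMeasurable
      (Eventually.of_forall fun ω => ?_)
    rw [Real.norm_of_nonneg (mF_nonneg τ E0 V hVnn ω F k)]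
    exact mF_le τ E0 hE00 V hVnn p c₁ hp hc₁ lam hlamnn hgrowth ω F k
  -- constants
  set K : ℝ := 1 + ∑ i : Fin d, ∫ ω, lam (stdb i) ω ^ (-γ) ∂P with hK
  set L : ℝ := ∑ b ∈ E0, ∫ ω, lam b ω ∂P with hL
  have hL0 : 0 ≤ L := Finset.sum_nonneg hLnn
  have hMnn : ∀ i : Fin d, 0 ≤ ∫ ω, lam (stdb i) ω ^ (-γ) ∂P := fun i =>
    integral_nonneg fun ω => Real.rpow_nonneg (hlamnn _ (hE0b i) ω) _
  have hK1 : 1 ≤ K := by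
    have := Finset.sum_nonneg fun (i : Fin d) (_ : i ∈ Finset.univ) => hMnn i
    linarith
  have hMK : ∀ i : Fin d, ∫ ω, lam (stdb i) ω ^ (-γ) ∂P ≤ K := fun i => by
    have := Finset.single_le_sum (fun (i : Fin d) (_ : i ∈ Finset.univ) => hMnn i)
      (Finset.mem_univ i)
    linarith
  have hLi : ∀ i : Fin d, ∫ ω, lam (stdb i) ω ∂P ≤ L := fun i =>
    Finset.single_le_sum hLnn (hE0b i)
  have hd0 : (0 : ℝ) < d := by exact_mod_cast (by omega : 0 < d)
  have hK0 : 0 < K := by linarith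
  set A : ℝ := K ^ (-(p - 1)) / c₁ / (d : ℝ) ^ p with hA
  have hA0 : 0 < A := by positivity
  -- lower bound
  have hlow : ∀ (F : Rd d →L[ℝ] Rn n), A * ‖F‖ ^ p - c₁ * L ≤ W0 P τ E0 V F := by
    intro F
    obtain ⟨i, hi⟩ := exists_dir hd F
    haveI : Nonempty {k : ℕ // 0 < k} := ⟨⟨1, one_pos⟩⟩
    refine le_ciInf fun k => ?_
    have hk0 : (0 : ℝ) < (((k : ℕ) : ℝ) ^ d) := by
      have : (0 : ℝ) < ((k : ℕ) : ℝ) := by exact_mod_cast k.2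
      positivity
    rw [le_inv_mul_iff₀ hk0]
    set a := ‖F (toRd (stdb i))‖ with ha
    have ha0 : 0 ≤ a := norm_nonneg _
    set μ := K ^ (-(p - 1)) * a ^ (p - 1) with hμ
    have hμ0 : 0 ≤ μ := by positivity
    have hG : ∀ z, Integrable (fun ω => (p - 1) * μ ^ (p / (p - 1)) / c₁ *
        (lam (stdb i) (τ z ω)) ^ (-γ) + c₁ * lam (stdb i) (τ z ω)) P := fun z =>
      ((hshI _ (hinv i) z).const_mul _).add ((hshI _ (hint _ (hE0b i)) z).const_mul _)
    have hmono := integral_mono_ae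
      ((integrable_const (((k : ℕ) : ℝ) ^ d * (p * μ * a / c₁))).sub
        (integrable_finset_sum (latt d k) fun z _ => hG z)) (hmI F k) (by
        filter_upwards [hpos i] with ω hω
        exact le_mF hd τ E0 V hVnn p c₁ hp hc₁ lam hgrowth i (hE0b i) ω hω μ hμ0 F k)
    refine le_trans ?_ hmono
    have hval : ∀ z, ∫ ω, ((p - 1) * μ ^ (p / (p - 1)) / c₁ *
        (lam (stdb i) (τ z ω)) ^ (-γ) + c₁ * lam (stdb i) (τ z ω)) ∂P =
        (p - 1) * μ ^ (p / (p - 1)) / c₁ * (∫ ω, lam (stdb i) ω ^ (-γ) ∂P) +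
          c₁ * ∫ ω, lam (stdb i) ω ∂P := by
      intro z
      rw [integral_add ((hshI _ (hinv i) z).const_mul _)
        ((hshI _ (hint _ (hE0b i)) z).const_mul _), integral_const_mul, integral_const_mul,
        hshE _ (hinv i) z, hshE _ (hint _ (hE0b i)) z]
    have hint2 : ∫ ω, (((k : ℕ) : ℝ) ^ d * (p * μ * a / c₁) -
        ∑ z ∈ latt d k, ((p - 1) * μ ^ (p / (p - 1)) / c₁ *
        (lam (stdb i) (τ z ω)) ^ (-γ) + c₁ * lam (stdb i) (τ z ω))) ∂P =
        ((k : ℕ) : ℝ) ^ d * (p * μ * a / c₁ -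
         ((p - 1) * μ ^ (p / (p - 1)) / c₁ * (∫ ω, lam (stdb i) ω ^ (-γ) ∂P) +
          c₁ * ∫ ω, lam (stdb i) ω ∂P)) := by
      rw [integral_sub (integrable_const _)
        (integrable_finset_sum (latt d k) fun z _ => hG z),
        integral_finset_sum _ fun z _ => hG z]
      simp only [hval, Finset.sum_const, card_latt, nsmul_eq_mul, integral_const, probReal_univ,
        one_smul]
      push_cast
      ring
    refine le_trans ?_ hint2.ge
    refine mul_le_mul_of_nonneg_left ?_ hk0.le
    have hs := slope_aux p _ K a hp hK1 (hMK i) ha0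
    rw [← hμ] at hs
    have hs' := div_le_div_of_nonneg_right hs hc₁.le
    have hAF : A * ‖F‖ ^ p ≤ K ^ (-(p - 1)) * a ^ p / c₁ := by
      have h1 : (‖F‖ / d) ^ p ≤ a ^ p := Real.rpow_le_rpow (by positivity) hi hp0.le
      rw [Real.div_rpow (norm_nonneg _) hd0.le] at h1
      calc A * ‖F‖ ^ p = K ^ (-(p - 1)) / c₁ * (‖F‖ ^ p / (d : ℝ) ^ p) := by
            rw [hA]; ring
        _ ≤ K ^ (-(p - 1)) / c₁ * a ^ p := mul_le_mul_of_nonneg_left h1 (by positivity)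
        _ = _ := by ring
    have hcl := mul_le_mul_of_nonneg_left (hLi i) hc₁.le
    have e : (p * μ * a - (p - 1) * μ ^ (p / (p - 1)) * ∫ ω, lam (stdb i) ω ^ (-γ) ∂P) / c₁ =
      p * μ * a / c₁ - (p - 1) * μ ^ (p / (p - 1)) / c₁ * ∫ ω, lam (stdb i) ω ^ (-γ) ∂P := by
      ring
    linarith
  -- upper bound
  have hup : ∀ (F : Rd d →L[ℝ] Rn n),
      W0 P τ E0 V F ≤ c₁ * (E0.card + L) * (1 + ‖F‖ ^ p) := by
    intro F
    refine (ciInf_le ⟨0, ?_⟩ (⟨1, one_pos⟩ : {k : ℕ // 0 < k})).trans ?_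
    · rintro _ ⟨k, rfl⟩
      exact mul_nonneg (by positivity)
        (integral_nonneg fun ω => mF_nonneg τ E0 V hVnn ω F k)
    · have h1 := integral_mono (hmI F 1) (hupI F 1) fun ω =>
        mF_le τ E0 hE00 V hVnn p c₁ hp hc₁ lam hlamnn hgrowth ω F 1
      have hI : ∀ z, ∀ b ∈ E0,
          Integrable (fun ω => c₁ * (1 + lam b (τ z ω) * (‖F‖ ^ p + 1))) P := fun z b hb =>
        ((integrable_const 1).add ((hshI _ (hint b hb) z).mul_const _)).const_mul _
      have hval : ∀ z, ∀ b ∈ E0, ∫ ω, c₁ * (1 + lam b (τ z ω) * (‖F‖ ^ p + 1)) ∂P =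
          c₁ * (1 + (∫ ω, lam b ω ∂P) * (‖F‖ ^ p + 1)) := by
        intro z b hb
        rw [integral_const_mul, integral_add (integrable_const 1)
          ((hshI _ (hint b hb) z).mul_const _), integral_mul_const, hshE _ (hint b hb) z]
        simp
      rw [integral_finset_sum _ fun z _ => integrable_finset_sum _ fun b hb => hI z b hb,
        Finset.sum_congr rfl fun z _ => (integral_finset_sum _ fun b hb => hI z b hb).trans
          (Finset.sum_congr rfl fun b hb => hval z b hb),
        Finset.sum_const, card_latt, ← Finset.mul_sum, Finset.sum_add_distrib,
        ← Finset.sum_mul, ← hL] at h1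
      simp only [one_pow, one_smul, Finset.sum_const, nsmul_eq_mul, mul_one] at h1
      simp only [Nat.cast_one, one_pow, inv_one, one_mul]
      refine h1.trans ?_
      have hF : 0 ≤ ‖F‖ ^ p := by positivity
      rw [mul_assoc]
      refine mul_le_mul_of_nonneg_left ?_ hc₁.le
      have : 0 ≤ (E0.card : ℝ) * ‖F‖ ^ p := by positivity
      nlinarith
  refine ⟨1 / A + c₁ * L + c₁ * (E0.card + L), by positivity, fun F => ⟨?_, ?_⟩⟩
  · refine le_trans ?_ (hlow F)
    have hx : 0 ≤ c₁ * L := by positivity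
    have hy : 0 ≤ c₁ * (E0.card + L) := by positivity
    have hz : 0 < 1 / A := by positivity
    have h1 : 1 / (1 / A + c₁ * L + c₁ * (E0.card + L)) ≤ A := by
      rw [one_div_le (by positivity) hA0]
      linarith
    have h2 := mul_le_mul_of_nonneg_right h1 (by positivity : 0 ≤ ‖F‖ ^ p)
    linarith
  · refine (hup F).trans ?_
    have hx : 0 ≤ c₁ * L := by positivity
    have hz : 0 < 1 / A := by positivity
    refine mul_le_mul_of_nonneg_right ?_ (by positivity)
    linarith

end StochHom
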